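/- Let $C$ be a smooth non-hyperelliptic complex projective curve of genus $3$ and let $E$ be a stable, globally generated rank-two vector bundle on $C$ with $\det E\cong\omega_C^{\otimes 2}$ and $h^0(E)=4$. Let $\overline E$ be the dual span of $E$, that is, the dual of the kernel of the evaluation map $H^0(E)\otimes\mathcal O_C\to E$. Let $p:\mathbb P(E)=\operatorname{Proj}\operatorname{Sym}E\to C$ be the projection, let $n:\mathbb P(E)\to\mathbb P^3=\mathbb P H^0(E)^*$ be the tautological morphism, and let $R=n(\mathbb P(E))=\bigcup_{x\in C}\mathbb P(E_x^*)$ be the tautological scroll of $E$, of which $n:\mathbb P(E)\to R$ is the normalization. Let $o\in\operatorname{Sing}R$ and write $p_*n^*o=x_1+\dots+x_k$, where $n^*o$ is the scheme-theoretic fibre of $n$ over $o$. Then for every effective divisor $d\le x_1+\dots+x_k$ on $C$ one has $h^0(\overline E(-d))\ge 1$. -/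

import Mathlib

open CategoryTheory AlgebraicGeometry TopologicalSpace Opposite

noncomputable section

namespace OcticScroll

/-! ### Sheaves of modules on a scheme -/

section Modules

variable {X : Scheme.{0}}

/-- The presheaf of modules underlying an `𝒪_X`-module. -/
abbrev toPre (M : X.Modules) :
    PresheafOfModules.{0} (X.presheaf ⋙ forget₂ CommRingCat RingCat) := M.val

/-- The sheaf of modules associated with a presheaf of modules. -/
def sheafify (P : PresheafOfModules.{0} (X.presheaf ⋙ forget₂ CommRingCat RingCat)) :
    X.Modules :=
  (PresheafOfModules.sheafification (𝟙 X.ringCatSheaf.obj)).obj P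

/-- The stalk `M_x` is a module over the local ring `𝒪_{X,x}`. -/
instance stalkModule (M : X.Modules) (x : X) :
    Module (X.presheaf.stalk x) (M.presheaf.stalk x) :=
  letI h (Y : TopCat.{0}) (R : Y.Presheaf CommRingCat.{0})
    (N : PresheafOfModules.{0} (R ⋙ forget₂ _ _)) (y : Y) :
    Module (R.stalk y) ↑(TopCat.Presheaf.stalk N.presheaf y) := inferInstance
  h X.carrier X.presheaf (toPre M) x

theorem germ_smul (M : X.Modules) {x : X} {U : X.Opens} (hx : x ∈ U) (r : Γ(X, U))
    (m : Γ(M, U)) :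
    M.presheaf.germ U x hx (r • m) =
      X.presheaf.germ U x hx r • M.presheaf.germ U x hx m :=
  PresheafOfModules.germ_smul (R := X.presheaf) (toPre M) x U hx r m

/-- The structure sheaf `𝒪_X` as a module over itself. -/
def structureModule (X : Scheme.{0}) : X.Modules := SheafOfModules.unit X.ringCatSheaf

/-- A section of the module `𝒪_X` is a regular function. -/
def asFunction {U : X.Opens} (f : Γ(structureModule X, U)) : Γ(X, U) := f

/-- A regular function is a section of the module `𝒪_X`. -/
def ofFunction {U : X.Opens} (f : Γ(X, U)) : Γ(structureModule X, U) := f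

/-- `M` is locally free of rank `r`: every point has an open neighbourhood `U` with sections
`s₁, …, s_r` of `M` over `U` that are a basis of `M(V)` over `𝒪_X(V)` for all open `V ⊆ U`. -/
def IsVectorBundle (M : X.Modules) (r : ℕ) : Prop :=
  ∀ x : X, ∃ (U : X.Opens) (_ : x ∈ U) (s : Fin r → Γ(M, U)),
    ∀ (V : X.Opens) (h : V ≤ U),
      Function.Bijective fun f : Fin r → Γ(X, V) =>
        ∑ i, f i • M.presheaf.map (homOfLE h).op (s i)

/-- The tensor product of `𝒪_X`-modules. -/
def tensor (M N : X.Modules) : X.Modules :=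
  sheafify (PresheafOfModules.Monoidal.tensorObj (R := X.presheaf) (toPre M) (toPre N))

/-- A ring homomorphism `f : A → B` and an `f`-linear map `g : M → N` induce
`⋀² M → ⋀² N`, `m ∧ m' ↦ g m ∧ g m'`. -/
def wedgeMap {A B : Type} [CommRing A] [CommRing B] (f : A →+* B) {M N : Type}
    [AddCommGroup M] [Module A M] [AddCommGroup N] [Module B N] (g : M →ₛₗ[f] N) :
    ⋀[A]^2 M →ₛₗ[f] ⋀[B]^2 N :=
  letI : Module A (⋀[B]^2 N) := Module.compHom _ f
  letI alt : M [⋀^Fin 2]→ₗ[A] ⋀[B]^2 N :=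
    { toFun := fun v => exteriorPower.ιMulti B 2 (fun i => g (v i))
      map_update_add' := fun {dec} v i a b => by
        have h (c : M) : (fun j => g (Function.update v i c j)) =
            Function.update (fun j => g (v j)) i (g c) := by
          ext j; by_cases hj : j = i
          · subst hj; simp
          · simp [hj]
        rw [h, h, h, map_add, AlternatingMap.map_update_add]
      map_update_smul' := fun {dec} v i a b => by
        have h (c : M) : (fun j => g (Function.update v i c j)) =
            Function.update (fun j => g (v j)) i (g c) := by
          ext j; by_cases hj : j = i
          · subst hj; simp
          · simp [hj]
        rw [h, h, map_smulₛₗ, AlternatingMap.map_update_smul]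
        rfl
      map_eq_zero_of_eq' := fun v i j hv hij =>
        AlternatingMap.map_eq_zero_of_eq _ _ (congrArg g hv) hij }
  letI l : ⋀[A]^2 M →ₗ[A] ⋀[B]^2 N := exteriorPower.alternatingMapLinearEquiv alt
  { toFun := l, map_add' := l.map_add, map_smul' := fun a m => l.map_smul a m }

theorem wedgeMap_ιMulti {A B : Type} [CommRing A] [CommRing B] (f : A →+* B) {M N : Type}
    [AddCommGroup M] [Module A M] [AddCommGroup N] [Module B N] (g : M →ₛₗ[f] N)
    (v : Fin 2 → M) :
    wedgeMap f g (exteriorPower.ιMulti A 2 v) = exteriorPower.ιMulti B 2 (fun i => g (v i)) := by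
  let _ : Module A (⋀[B]^2 N) := Module.compHom _ f
  exact exteriorPower.alternatingMapLinearEquiv_apply_ιMulti _ v

section Wedge

variable {D : Type} [Category.{0} D] {R : Dᵒᵖ ⥤ CommRingCat.{0}}

/-- The restriction map `P(U) → P(V)` of a presheaf of modules, as a semilinear map. -/
def resMap (P : PresheafOfModules.{0} (R ⋙ forget₂ CommRingCat RingCat))
    {U V : Dᵒᵖ} (f : U ⟶ V) :
    P.obj U →ₛₗ[((R ⋙ forget₂ CommRingCat RingCat).map f).hom] P.obj V where
  toFun m := (P.map f).hom m
  map_add' a b := (P.map f).hom.map_add a b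
  map_smul' a m := (P.map f).hom.map_smul a m

theorem resMap_id (P : PresheafOfModules.{0} (R ⋙ forget₂ CommRingCat RingCat))
    (U : Dᵒᵖ) (m : P.obj U) : resMap P (𝟙 U) m = m := by
  change (P.map (𝟙 U)).hom m = m
  rw [P.map_id]
  rfl

theorem resMap_comp (P : PresheafOfModules.{0} (R ⋙ forget₂ CommRingCat RingCat))
    {U V W : Dᵒᵖ} (f : U ⟶ V) (g : V ⟶ W) (m : P.obj U) :
    resMap P (f ≫ g) m = resMap P g (resMap P f m) := by
  change (P.map (f ≫ g)).hom m = _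
  rw [P.map_comp]
  rfl

/-- The map `⋀² P(U) → ⋀² P(V)` induced by the restriction map `P(U) → P(V)`. -/
def wedgeRes (P : PresheafOfModules.{0} (R ⋙ forget₂ CommRingCat RingCat)) {U V : Dᵒᵖ}
    (f : U ⟶ V) :
    ModuleCat.of ((R ⋙ forget₂ CommRingCat RingCat).obj U)
      (⋀[(R ⋙ forget₂ CommRingCat RingCat).obj U]^2 (P.obj U)) ⟶
    (ModuleCat.restrictScalars ((R ⋙ forget₂ CommRingCat RingCat).map f).hom).obj
      (ModuleCat.of _ (⋀[(R ⋙ forget₂ CommRingCat RingCat).obj V]^2 (P.obj V))) :=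
  ModuleCat.ofHom
    (Y := (ModuleCat.restrictScalars ((R ⋙ forget₂ CommRingCat RingCat).map f).hom).obj
      (ModuleCat.of _ (⋀[(R ⋙ forget₂ CommRingCat RingCat).obj V]^2 (P.obj V))))
    { toFun := wedgeMap _ (resMap P f)
      map_add' := (wedgeMap _ (resMap P f)).map_add'
      map_smul' := (wedgeMap _ (resMap P f)).map_smul' }

theorem wedgeRes_apply (P : PresheafOfModules.{0} (R ⋙ forget₂ CommRingCat RingCat)) {U V : Dᵒᵖ}
    (f : U ⟶ V) (m : ⋀[(R ⋙ forget₂ CommRingCat RingCat).obj U]^2 (P.obj U)) :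
    (wedgeRes P f).hom m = wedgeMap _ (resMap P f) m := rfl

theorem wedgeMap_resMap_id (P : PresheafOfModules.{0} (R ⋙ forget₂ CommRingCat RingCat))
    (U : Dᵒᵖ) (m : ⋀[(R ⋙ forget₂ CommRingCat RingCat).obj U]^2 (P.obj U)) :
    wedgeMap _ (resMap P (𝟙 U)) m = m := by
  have hm : m ∈ Submodule.span ((R ⋙ forget₂ CommRingCat RingCat).obj U)
      (Set.range (exteriorPower.ιMulti ((R ⋙ forget₂ CommRingCat RingCat).obj U) 2
        (M := P.obj U))) := by
    rw [exteriorPower.ιMulti_span]; trivial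
  induction hm using Submodule.span_induction with
  | mem x hx =>
    obtain ⟨v, rfl⟩ := hx
    rw [wedgeMap_ιMulti]
    simp only [resMap_id]
  | zero => exact map_zero _
  | add x y _ _ hx hy => rw [map_add, hx, hy]
  | smul a x _ hx =>
    rw [map_smulₛₗ, hx]
    congr 1
    rw [CategoryTheory.Functor.map_id]
    rfl

theorem wedgeMap_resMap_comp (P : PresheafOfModules.{0} (R ⋙ forget₂ CommRingCat RingCat))
    {U V W : Dᵒᵖ} (f : U ⟶ V) (g : V ⟶ W)
    (m : ⋀[(R ⋙ forget₂ CommRingCat RingCat).obj U]^2 (P.obj U)) :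
    wedgeMap _ (resMap P (f ≫ g)) m = wedgeMap _ (resMap P g) (wedgeMap _ (resMap P f) m) := by
  have hm : m ∈ Submodule.span ((R ⋙ forget₂ CommRingCat RingCat).obj U)
      (Set.range (exteriorPower.ιMulti ((R ⋙ forget₂ CommRingCat RingCat).obj U) 2
        (M := P.obj U))) := by
    rw [exteriorPower.ιMulti_span]; trivial
  induction hm using Submodule.span_induction with
  | mem x hx =>
    obtain ⟨v, rfl⟩ := hx
    rw [wedgeMap_ιMulti, wedgeMap_ιMulti, wedgeMap_ιMulti]
    simp only [resMap_comp]
  | zero => simp only [map_zero]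
  | add x y _ _ hx hy => rw [map_add, hx, hy, map_add, map_add]
  | smul a x _ hx =>
    rw [map_smulₛₗ, hx, map_smulₛₗ, map_smulₛₗ]
    congr 1
    rw [CategoryTheory.Functor.map_comp]
    rfl

/-- The presheaf `U ↦ ⋀² P(U)`. -/
def wedgePresheaf (P : PresheafOfModules.{0} (R ⋙ forget₂ CommRingCat RingCat)) :
    PresheafOfModules.{0} (R ⋙ forget₂ CommRingCat RingCat) where
  obj U := ModuleCat.of _ (⋀[(R ⋙ forget₂ CommRingCat RingCat).obj U]^2 (P.obj U))
  map f := wedgeRes P f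
  map_id U := ModuleCat.hom_ext (LinearMap.ext fun m => wedgeMap_resMap_id P U m)
  map_comp f g := ModuleCat.hom_ext (LinearMap.ext fun m => wedgeMap_resMap_comp P f g m)

end Wedge

/-- The determinant `⋀² M` of a rank-two bundle. -/
def detTwo (M : X.Modules) : X.Modules := sheafify (wedgePresheaf (R := X.presheaf) (toPre M))

/-- The morphism `𝒪_X → M`, `f ↦ f s`, given by a global section `s` of `M`. -/
def sectionHom (M : X.Modules) (s : Γ(M, ⊤)) : structureModule X ⟶ M :=
  (SheafOfModules.unitHomEquiv (R := X.ringCatSheaf) M).symm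
    (PresheafOfModules.sectionsMk
      (fun U => M.presheaf.map (homOfLE (le_top : U.unop ≤ ⊤)).op s) (fun U V f => by
        refine ((ConcreteCategory.comp_apply (M.presheaf.map _) (M.presheaf.map f) s).symm.trans ?_)
        rw [← Functor.map_comp]
        rfl))

theorem sectionHom_app (M : X.Modules) (s : Γ(M, ⊤)) (U : X.Opens)
    (f : Γ(structureModule X, U)) :
    (sectionHom M s).app U f =
      asFunction f • M.presheaf.map (homOfLE (le_top : U ≤ ⊤)).op s := by
  rfl

end Modules

/-! ### Smooth projective curves over `ℂ` -/

/-- A smooth projective complex curve: an integral scheme, proper and smooth of relative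
dimension one over `ℂ` (for curves, proper is the same as projective). -/
structure SmoothProjectiveCurve where
  X : Scheme.{0}
  str : X ⟶ Spec (CommRingCat.of ℂ)
  isIntegral : IsIntegral X
  isProper : IsProper str
  smooth : SmoothOfRelativeDimension 1 str

attribute [instance] SmoothProjectiveCurve.isIntegral SmoothProjectiveCurve.isProper
  SmoothProjectiveCurve.smooth

variable {C : SmoothProjectiveCurve}

instance : IsLocallyNoetherian C.X := LocallyOfFiniteType.isLocallyNoetherian C.str

/-- The points of the curve, in the classical sense. -/
abbrev ClosedPoint (C : SmoothProjectiveCurve) : Type := {x : C.X // IsClosed ({x} : Set C.X)}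

/-- The constant functions `ℂ → 𝒪_C(U)`. -/
def constants (U : C.X.Opens) : ℂ →+* Γ(C.X, U) :=
  ((Scheme.ΓSpecIso (CommRingCat.of ℂ)).inv ≫ C.str.appTop ≫
    C.X.presheaf.map (homOfLE (le_top : U ≤ ⊤)).op).hom

theorem map_constants {U V : C.X.Opens} (h : V ≤ U) (c : ℂ) :
    C.X.presheaf.map (homOfLE h).op (constants U c) = constants V c := by
  change (C.X.presheaf.map (homOfLE _).op ≫ C.X.presheaf.map (homOfLE h).op).hom _ = _
  rw [← Functor.map_comp]
  rfl

/-- The local rings of `C`, in particular its function field, are `ℂ`-algebras. -/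
instance stalkAlgebra (x : C.X) : Algebra ℂ (C.X.presheaf.stalk x) :=
  ((C.X.presheaf.germ ⊤ x trivial).hom.comp (constants ⊤)).toAlgebra

/-- The sections of an `𝒪_C`-module over an open set form a complex vector space. -/
instance sectionsModule (M : C.X.Modules) (U : C.X.Opens) : Module ℂ Γ(M, U) :=
  Module.compHom _ (constants U)

/-- The space `H⁰(M)` of global sections. -/
abbrev H0 (M : C.X.Modules) : Type := Γ(M, ⊤)

/-- `h⁰(M) = dim H⁰(M)`. -/
def h0 (M : C.X.Modules) : Cardinal := Module.rank ℂ (H0 M)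

/-- The germ at `x` of a global section. -/
def germAt (M : C.X.Modules) (x : C.X) (s : H0 M) : M.presheaf.stalk x :=
  M.presheaf.germ ⊤ x trivial s

theorem germAt_add (M : C.X.Modules) (x : C.X) (s t : H0 M) :
    germAt M x (s + t) = germAt M x s + germAt M x t :=
  map_add (M.presheaf.germ ⊤ x trivial).hom s t

theorem germAt_smul (M : C.X.Modules) (x : C.X) (c : ℂ) (s : H0 M) :
    germAt M x (c • s) = algebraMap ℂ (C.X.presheaf.stalk x) c • germAt M x s :=
  germ_smul M (U := ⊤) trivial (constants ⊤ c) s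

/-- The constant presheaf `ℂ` maps to `𝒪_C`. -/
def constantsHom (C : SmoothProjectiveCurve) :
    (Functor.const _).obj (CommRingCat.of ℂ) ⟶ C.X.presheaf where
  app U := CommRingCat.ofHom (constants U.unop)
  naturality U V f := by
    ext c
    exact (map_constants f.unop.le c).symm

/-- The canonical sheaf `ω_C = Ω_{C/ℂ}`: the sheaf associated with `U ↦ Ω_{𝒪_C(U)/ℂ}`. -/
def canonicalSheaf (C : SmoothProjectiveCurve) : C.X.Modules :=
  sheafify (PresheafOfModules.DifferentialsConstruction.relativeDifferentials' (constantsHom C))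

/-- The genus `h⁰(ω_C)`. -/
def genus (C : SmoothProjectiveCurve) : Cardinal := h0 (canonicalSheaf C)

/-- `C` has a morphism of degree two onto `ℙ¹`, that is, a rational function `f` such that the
function field has degree two over `ℂ(f)`. -/
def HasDegreeTwoMap (C : SmoothProjectiveCurve) : Prop :=
  ∃ f : C.X.functionField,
    Module.finrank (IntermediateField.adjoin ℂ {f}) C.X.functionField = 2

/-! ### Degree, stability, global generation -/

/-- The map from the stalk at `x` to the stalk at the generic point (rational sections). -/
def toGeneric (M : C.X.Modules) (x : C.X) :
    M.presheaf.stalk x ⟶ M.presheaf.stalk (genericPoint C.X) :=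
  M.presheaf.stalkSpecializes ((genericPoint_spec C.X).specializes trivial)

/-- The bundle `M` of rank `r` has degree `n`: there is a rational frame `b₁, …, b_r` of `M` such
that the rational section `b₁ ∧ ⋯ ∧ b_r` of `det M` has a divisor of degree `n`. The order of
this section at `x` is that of `det A`, where `A` writes the `b_j` in a basis of the stalk `M_x`. -/
def HasDegree (M : C.X.Modules) (r : ℕ) (n : ℤ) : Prop :=
  ∃ (b : Module.Basis (Fin r) C.X.functionField (M.presheaf.stalk (genericPoint C.X)))
    (c : ∀ x : ClosedPoint C, Module.Basis (Fin r) (C.X.presheaf.stalk x.1) (M.presheaf.stalk x.1))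
    (A : ClosedPoint C → Matrix (Fin r) (Fin r) C.X.functionField),
    (∀ x j, b j = ∑ i, A x i j • toGeneric M x.1 (c x i)) ∧
    n = ∑ᶠ x : ClosedPoint C, C.X.ord (A x).det x.1

/-- Slope stability of a rank-two bundle: `deg L < deg E / 2` for every invertible subsheaf. -/
def IsStable (E : C.X.Modules) : Prop :=
  ∀ (L : C.X.Modules) (i : L ⟶ E), IsVectorBundle L 1 → Mono i →
    ∀ m n : ℤ, HasDegree L 1 m → HasDegree E 2 n → 2 * m < n

/-- Every stalk is generated by germs of global sections. -/
def IsGloballyGenerated (E : C.X.Modules) : Prop :=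
  ∀ x : C.X, Submodule.span (C.X.presheaf.stalk x) (Set.range (germAt E x)) = ⊤

/-! ### The dual span -/

/-- The trivial bundle `H⁰(E) ⊗ 𝒪_C`, as the free module on a basis of `H⁰(E)`. -/
def trivialBundle (E : C.X.Modules) : C.X.Modules :=
  ∐ fun _ : Module.Free.ChooseBasisIndex ℂ (H0 E) => structureModule C.X

/-- The evaluation `H⁰(E) ⊗ 𝒪_C → E`. -/
def evaluation (E : C.X.Modules) : trivialBundle E ⟶ E :=
  Limits.Sigma.desc fun i => sectionHom E (Module.Free.chooseBasis ℂ (H0 E) i)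

/-- The kernel of the evaluation; the dual span `Ē` of `E` is its dual. -/
def evalKernel (E : C.X.Modules) : C.X.Modules := Limits.kernel (evaluation E)

theorem scalar_app (c : ℂ) (U : C.X.Opens) (f : Γ(structureModule C.X, U)) :
    asFunction ((sectionHom (structureModule C.X) (ofFunction (constants ⊤ c))).app U f) =
      asFunction f * constants U c := by
  refine (congrArg asFunction (sectionHom_app _ _ U f)).trans ?_
  exact congrArg (fun t => asFunction f * t) (map_constants le_top c)

theorem scalar_ext {φ ψ : structureModule C.X ⟶ structureModule C.X}
    (h : ∀ (U : C.X.Opens) (f : Γ(structureModule C.X, U)),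
      asFunction (φ.app U f) = asFunction (ψ.app U f)) : φ = ψ :=
  Scheme.Modules.hom_ext _ _ fun U => by
    ext f
    exact h U f

/-- Multiplication by constants on `𝒪_C`. -/
def scalarEnd (C : SmoothProjectiveCurve) : ℂ →+* End (structureModule C.X) where
  toFun c := sectionHom (structureModule C.X) (ofFunction (constants ⊤ c))
  map_one' := scalar_ext fun U f => (scalar_app 1 U f).trans (by rw [map_one, mul_one]; rfl)
  map_mul' a b := scalar_ext fun U f => by
    refine (scalar_app (a * b) U f).trans (Eq.trans ?_ ((scalar_app a U _).trans
      (congrArg (fun t => t * constants U a) (scalar_app b U f))).symm)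
    rw [map_mul, mul_assoc, mul_comm (constants U a)]
  map_zero' := scalar_ext fun U f => (scalar_app 0 U f).trans (by rw [map_zero, mul_zero]; rfl)
  map_add' a b := scalar_ext fun U f => by
    refine (scalar_app (a + b) U f).trans (Eq.trans ?_
      (congrArg₂ (fun t u => t + u) (scalar_app a U f) (scalar_app b U f)).symm)
    rw [map_add, mul_add]

/-- `H⁰(M^*)`, the space of global sections of the dual of `M`: the `𝒪_C`-linear maps
`M → 𝒪_C`. -/
abbrev DualSections (M : C.X.Modules) : Type := M ⟶ structureModule C.X

instance dualSectionsModule (M : C.X.Modules) : Module ℂ (DualSections M) :=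
  Module.compHom _ (scalarEnd C)

theorem dualSections_smul_app (M : C.X.Modules) (c : ℂ) (φ : DualSections M) (U : C.X.Opens)
    (m : Γ(M, U)) : asFunction ((c • φ).app U m) = asFunction (φ.app U m) * constants U c :=
  scalar_app c U (φ.app U m)

/-- `H⁰(M^*(-d))` for a bundle `M` and an effective divisor `d`: the sections of `M^*` that vanish
along `d`, that is, the `𝒪_C`-linear maps from `M` to the ideal sheaf `𝒪_C(-d) ⊆ 𝒪_C`. -/
def dualTwistSections (M : C.X.Modules) (d : ClosedPoint C →₀ ℕ) :
    Submodule ℂ (DualSections M) where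
  carrier := {φ | ∀ (U : C.X.Opens) (m : Γ(M, U)) (x : ClosedPoint C) (hx : x.1 ∈ U),
    C.X.presheaf.germ U x.1 hx (asFunction (φ.app U m)) ∈
      IsLocalRing.maximalIdeal (C.X.presheaf.stalk x.1) ^ d x}
  add_mem' {φ ψ} hφ hψ U m x hx := by
    have h := Ideal.add_mem _ (hφ U m x hx) (hψ U m x hx)
    rw [← map_add] at h
    exact h
  zero_mem' U m x hx := by
    have h : C.X.presheaf.germ U x.1 hx (0 : Γ(C.X, U)) ∈
        IsLocalRing.maximalIdeal (C.X.presheaf.stalk x.1) ^ d x := by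
      rw [map_zero]; exact Ideal.zero_mem _
    exact h
  smul_mem' c φ hφ U m x hx := by
    rw [dualSections_smul_app, map_mul]
    exact Ideal.mul_mem_right _ _ (hφ U m x hx)

/-- `h⁰(Ē(-d))`, where `Ē` is the dual span of `E`. -/
def h0DualSpanTwist (E : C.X.Modules) (d : ClosedPoint C →₀ ℕ) : Cardinal :=
  Module.rank ℂ (dualTwistSections (evalKernel E) d)

/-! ### The tautological scroll `R ⊂ ℙ(H⁰(E)^*)` and its singular points -/

open scoped LinearAlgebra.Projectivization

/-- The projective space `ℙ(H⁰(E)^*)` of lines in `H⁰(E)^*`. -/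
abbrev PH (E : C.X.Modules) : Type := ℙ ℂ (Module.Dual ℂ (H0 E))

/-- The ruling `R_x = ℙ(E_x^*) ⊂ ℙ(H⁰(E)^*)`: the points `[ξ ∘ ev_x]`, where `ξ` is a linear form
on the fibre of `E` at `x`, i.e. an `𝒪_{C,x}`-linear map from the stalk to the residue field. -/
def ruling (E : C.X.Modules) (x : ClosedPoint C) : Set (PH E) :=
  {o | ∃ ξ : E.presheaf.stalk x.1 →ₗ[C.X.presheaf.stalk x.1]
      IsLocalRing.ResidueField (C.X.presheaf.stalk x.1),
    ∀ s : H0 E, algebraMap ℂ (IsLocalRing.ResidueField (C.X.presheaf.stalk x.1)) (o.rep s) =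
      ξ (germAt E x.1 s)}

/-- The tautological scroll `R`, the image of `ℙ(E)`. -/
def scroll (E : C.X.Modules) : Set (PH E) := ⋃ x : ClosedPoint C, ruling E x

/-- The differential at `v ∈ V^*` of the polynomial function on `V^*` given by a polynomial in
the elements of `V`. -/
def differential {V : Type} [AddCommGroup V] [Module ℂ V] (v : Module.Dual ℂ V)
    (F : MvPolynomial V ℂ) : Module.Dual ℂ (Module.Dual ℂ V) :=
  ∑ s ∈ F.vars, MvPolynomial.eval (fun t => v t) (MvPolynomial.pderiv s F) • Module.Dual.eval ℂ V s

/-- The Zariski tangent space at `o` of the affine cone over `Z ⊆ ℙ(V^*)`: the common zeros of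
the differentials at `o` of the homogeneous polynomials vanishing on `Z`. -/
def coneTangentSpace {V : Type} [AddCommGroup V] [Module ℂ V] (Z : Set (ℙ ℂ (Module.Dual ℂ V)))
    (o : ℙ ℂ (Module.Dual ℂ V)) : Submodule ℂ (Module.Dual ℂ V) :=
  ⨅ F ∈ {F : MvPolynomial V ℂ | (∃ n, F.IsHomogeneous n) ∧
      ∀ q ∈ Z, MvPolynomial.eval (fun t => q.rep t) F = 0}, LinearMap.ker (differential o.rep F)

/-- `Sing R`: the points of the surface `R` at which the Zariski tangent space has dimension
larger than two (so the tangent space of the three-dimensional cone over `R` has dimension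
larger than three). -/
def singularLocus (E : C.X.Modules) : Set (PH E) :=
  {o ∈ scroll E | 3 < Module.finrank ℂ (coneTangentSpace (scroll E) o)}

/-! ### The tautological map `n : ℙ(E) → R` and the divisor `p_* n^* o` -/

section Charts

variable {k A V M B : Type} [Field k] [CommRing A] [Algebra k A] [AddCommGroup V] [Module k V]
  [AddCommGroup M] [Module A M] [CommRing B]

/-- The coordinate ring `S/(e - 1)`, `S = Sym M`, of the affine chart `D₊(e)`, `e ∈ M`, of
`ℙ(M) = Proj S`. -/
def ProjChart (A : Type) {M : Type} [CommRing A] [AddCommGroup M] [Module A M] (e : M) : Type :=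
  SymmetricAlgebra A M ⧸ Ideal.span {SymmetricAlgebra.ι A M e - 1}

instance (e : M) : CommRing (ProjChart A e) :=
  inferInstanceAs (CommRing (SymmetricAlgebra A M ⧸ Ideal.span {SymmetricAlgebra.ι A M e - 1}))

instance (e : M) : Algebra A (ProjChart A e) :=
  inferInstanceAs (Algebra A (SymmetricAlgebra A M ⧸ Ideal.span {SymmetricAlgebra.ι A M e - 1}))

/-- The restriction of polynomials to the chart. -/
def toChart (A : Type) {M : Type} [CommRing A] [AddCommGroup M] [Module A M] (e : M) :
    SymmetricAlgebra A M →ₐ[A] ProjChart A e :=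
  Ideal.Quotient.mkₐ A (Ideal.span {SymmetricAlgebra.ι A M e - 1})

/-- The linear coordinates on the chart `D₊(e)`: the function `m / e`, for `m ∈ M`. -/
def chartCoord (A : Type) {M : Type} [CommRing A] [AddCommGroup M] [Module A M] (e : M) :
    M →ₗ[A] ProjChart A e :=
  (toChart A e).toLinearMap ∘ₗ SymmetricAlgebra.ι A M

theorem chartCoord_self (e : M) : chartCoord A e e = 1 := by
  refine Eq.trans ?_ (map_one (toChart A e))
  exact Ideal.Quotient.eq.mpr (Ideal.subset_span rfl)

/-- The universal property of the chart: for a ring homomorphism `f : A → B`, an `f`-linear map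
`l : M → B` with `l e = 1` extends to a ring homomorphism on the functions on `D₊(e)`. -/
def chartLift (e : M) (f : A →+* B) (l : M →ₛₗ[f] B) (hl : l e = 1) : ProjChart A e →+* B :=
  letI : Algebra A B := f.toAlgebra
  letI l' : M →ₗ[A] B :=
    { toFun := l, map_add' := l.map_add, map_smul' := fun a m => l.map_smulₛₗ a m }
  Ideal.Quotient.lift _ (SymmetricAlgebra.lift l').toRingHom (fun a ha => by
    have h : Ideal.span {SymmetricAlgebra.ι A M e - 1} ≤
        RingHom.ker (SymmetricAlgebra.lift l').toRingHom := by
      rw [Ideal.span_singleton_le_iff_mem, RingHom.mem_ker, map_sub, map_one, sub_eq_zero]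
      exact (SymmetricAlgebra.lift_ι_apply l' e).trans hl
    exact h ha)

theorem chartLift_coord (e : M) (f : A →+* B) (l : M →ₛₗ[f] B) (hl : l e = 1) (m : M) :
    chartLift e f l hl (chartCoord A e m) = l m := by
  let _ : Algebra A B := f.toAlgebra
  exact SymmetricAlgebra.lift_ι_apply
    { toFun := l, map_add' := l.map_add, map_smul' := fun a m => l.map_smulₛₗ a m } m

theorem chartLift_algebraMap (e : M) (f : A →+* B) (l : M →ₛₗ[f] B) (hl : l e = 1) (a : A) :
    chartLift e f l hl (algebraMap A (ProjChart A e) a) = f a := by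
  let _ : Algebra A B := f.toAlgebra
  exact (SymmetricAlgebra.lift
    ({ toFun := l, map_add' := l.map_add, map_smul' := fun a m => l.map_smulₛₗ a m } :
      M →ₗ[A] B)).commutes a

/-- For a `k`-algebra `A`, an `A`-module `M` and a `k`-linear map `g : V → M`, the map of
coordinate rings of the map of charts from `D₊(g s₀) ⊂ ℙ(M)` to `D₊(s₀) ⊂ ℙ(V)`, given by
`s / s₀ ↦ g s / g s₀`. -/
def chartMap (g : V →ₛₗ[algebraMap k A] M) (s₀ : V) : ProjChart k s₀ →+* ProjChart A (g s₀) :=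
  chartLift s₀ ((algebraMap A (ProjChart A (g s₀))).comp (algebraMap k A))
    { toFun := fun s => chartCoord A (g s₀) (g s)
      map_add' := fun s t => by rw [map_add, map_add]
      map_smul' := fun c s => by
        rw [map_smulₛₗ, map_smul, Algebra.smul_def, RingHom.comp_apply, smul_eq_mul] }
    (chartCoord_self (g s₀))

/-- The point `[v]` of `D₊(s₀) ⊂ ℙ(V)`, as evaluation of functions: `s / s₀ ↦ v s / v s₀`. -/
def pointEval (v : Module.Dual k V) (s₀ : V) (h : v s₀ ≠ 0) : ProjChart k s₀ →+* k :=
  chartLift s₀ (RingHom.id k) ((v s₀)⁻¹ • v) (by simp [h])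

/-- The ring of functions on the scheme-theoretic fibre over the point `[v]` of the map
`ℙ(M) → ℙ(V)` given by `g : V → M`: the fibre lies in the chart `D₊(g s₀)` as `v s₀ ≠ 0`, and its
ideal there is generated by the pull-backs of the functions on `D₊(s₀)` that vanish at `[v]`. -/
def FiberRing (g : V →ₛₗ[algebraMap k A] M) (v : Module.Dual k V) (s₀ : V) (h : v s₀ ≠ 0) : Type :=
  ProjChart A (g s₀) ⧸ (RingHom.ker (pointEval v s₀ h)).map (chartMap g s₀)

instance (g : V →ₛₗ[algebraMap k A] M) (v : Module.Dual k V) (s₀ : V) (h : v s₀ ≠ 0) :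
    CommRing (FiberRing g v s₀ h) :=
  inferInstanceAs (CommRing
    (ProjChart A (g s₀) ⧸ (RingHom.ker (pointEval v s₀ h)).map (chartMap g s₀)))

instance (g : V →ₛₗ[algebraMap k A] M) (v : Module.Dual k V) (s₀ : V) (h : v s₀ ≠ 0) :
    Algebra A (FiberRing g v s₀ h) :=
  inferInstanceAs (Algebra A
    (ProjChart A (g s₀) ⧸ (RingHom.ker (pointEval v s₀ h)).map (chartMap g s₀)))

end Charts

/-- The evaluation `H⁰(E) → E_x` at the stalk. It induces the tautological map `n` from
`ℙ(E) ×_C Spec 𝒪_{C,x} = Proj Sym E_x` to `ℙ(H⁰(E)^*) = Proj Sym H⁰(E)`. -/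
def germMap (E : C.X.Modules) (x : C.X) :
    H0 E →ₛₗ[algebraMap ℂ (C.X.presheaf.stalk x)] E.presheaf.stalk x where
  toFun := germAt E x
  map_add' := germAt_add E x
  map_smul' := germAt_smul E x

theorem exists_rep_ne_zero {E : C.X.Modules} (o : PH E) : ∃ s : H0 E, o.rep s ≠ 0 := by
  by_contra! h
  exact o.rep_nonzero (LinearMap.ext h)

/-- The multiplicity at `x` of the divisor `p_* n^* o` on `C`: the length over `𝒪_{C,x}` of the
part over `x` of the scheme-theoretic fibre `n⁻¹(o)`. -/
def fiberDivisor (E : C.X.Modules) (o : PH E) (x : ClosedPoint C) : ℕ∞ :=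
  Module.length (C.X.presheaf.stalk x.1)
    (FiberRing (germMap E x.1) o.rep (exists_rep_ne_zero o).choose (exists_rep_ne_zero o).choose_spec)

end OcticScroll

end

noncomputable section

namespace OcticScroll

open IsLocalRing TensorProduct in
theorem maximalIdeal_isPrincipal_of_rank_differentials_le_one {k A : Type} [Field k]
    [PerfectField k] [CommRing A] [IsLocalRing A] [IsNoetherianRing A] [Algebra k A]
    [Algebra.EssFiniteType k A] [Algebra.FormallySmooth k A]
    [Module.Finite A Ω[A⁄k]] [Module.Free A Ω[A⁄k]] (h : Module.finrank A Ω[A⁄k] ≤ 1) :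
    (maximalIdeal A).IsPrincipal := by
  have hsurj : Function.Surjective (algebraMap A (ResidueField A)) := residue_surjective
  have hess : Algebra.EssFiniteType k (ResidueField A) := .comp k A _
  have hsm : Algebra.FormallySmooth k (ResidueField A) := inferInstance
  have hinj : ∀ I : Ideal A, I = RingHom.ker (algebraMap A (ResidueField A)) →
      ∃ f : I.Cotangent →ₗ[A] ResidueField A ⊗[A] Ω[A⁄k], Function.Injective f := by
    rintro I rfl
    exact ⟨_, (Algebra.FormallySmooth.kerCotangentToTensor_injective_iff hsurj).mpr inferInstance⟩
  obtain ⟨f, hf⟩ := hinj (maximalIdeal A) ker_residue.symm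
  let F : CotangentSpace A →ₗ[ResidueField A] ResidueField A ⊗[A] Ω[A⁄k] :=
    LinearMap.extendScalarsOfSurjective hsurj f
  rw [← finrank_cotangentSpace_le_one_iff]
  refine (LinearMap.finrank_le_finrank_of_injective (f := F) hf).trans ?_
  rwa [Module.finrank_baseChange]

/-- A module generated by an element killed by `ϖ ^ n`, where `ϖ` generates a maximal ideal, has
length at most `n`. -/
theorem length_le_of_pow_smul_eq_zero {A : Type} [CommRing A] {ϖ : A}
    (hϖ : (Ideal.span {ϖ}).IsMaximal) (n : ℕ) {M : Type} [AddCommGroup M] [Module A M] (g : M)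
    (hg : Submodule.span A {g} = ⊤) (h : ϖ ^ n • g = 0) : Module.length A M ≤ n := by
  induction n generalizing M with
  | zero =>
    have : Subsingleton M := by
      rw [← Submodule.subsingleton_iff A, ← subsingleton_iff_bot_eq_top, ← hg]
      rw [eq_comm, Submodule.span_singleton_eq_bot]
      simpa using h
    simp
  | succ n ih =>
    let N : Submodule A M := Submodule.span A {ϖ • g}
    have hN : Module.length A N ≤ n := by
      refine ih (⟨ϖ • g, Submodule.mem_span_singleton_self _⟩ : N) ?_ ?_
      · rw [eq_top_iff]
        rintro ⟨y, hy⟩ -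
        obtain ⟨c, rfl⟩ := Submodule.mem_span_singleton.mp hy
        exact Submodule.mem_span_singleton.mpr ⟨c, rfl⟩
      · ext
        simpa [smul_smul, ← pow_succ] using h
    have hQ : Module.length A (M ⧸ N) ≤ 1 := by
      have hs : IsSimpleModule A (A ⧸ Ideal.span {ϖ}) :=
        isSimpleModule_iff_isCoatom.mpr hϖ.out
      rw [← Module.length_eq_one A (A ⧸ Ideal.span {ϖ})]
      let f : (A ⧸ Ideal.span {ϖ}) →ₗ[A] (M ⧸ N) :=
        Submodule.liftQ _ (LinearMap.toSpanSingleton A (M ⧸ N) (N.mkQ g)) (by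
          rw [Ideal.span, Submodule.span_singleton_le_iff_mem, LinearMap.mem_ker,
            LinearMap.toSpanSingleton_apply, ← map_smul]
          exact (Submodule.Quotient.mk_eq_zero N).mpr (Submodule.mem_span_singleton_self _))
      refine Module.length_le_of_surjective f fun y => ?_
      obtain ⟨y, rfl⟩ := N.mkQ_surjective y
      obtain ⟨c, rfl⟩ := Submodule.mem_span_singleton.mp (hg ▸ Submodule.mem_top : y ∈ _)
      exact ⟨Submodule.Quotient.mk c, rfl⟩
    rw [Module.length_eq_add_of_exact N.subtype N.mkQ N.injective_subtype N.mkQ_surjective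
      (LinearMap.exact_subtype_mkQ N)]
    push_cast
    exact add_le_add hN hQ

/-- In a local ring with principal maximal ideal `m`, an element which vanishes in a quotient
ring of length at least `n` lies in `m ^ n`. -/
theorem mem_maximalIdeal_pow_of_le_length {A B : Type} [CommRing A] [IsLocalRing A]
    (hm : (IsLocalRing.maximalIdeal A).IsPrincipal) [CommRing B] [Algebra A B]
    (hsurj : Function.Surjective (algebraMap A B)) {a : A} (ha : algebraMap A B a = 0) {n : ℕ}
    (hn : (n : ℕ∞) ≤ Module.length A B) : a ∈ IsLocalRing.maximalIdeal A ^ n := by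
  obtain ⟨ϖ, hϖ⟩ := hm
  change _ = Ideal.span {ϖ} at hϖ
  induction n with
  | zero => simp
  | succ n ih =>
    have h := ih (le_trans (by exact_mod_cast n.le_succ) hn)
    rw [hϖ, Ideal.span_singleton_pow, Ideal.mem_span_singleton] at h ⊢
    obtain ⟨u, rfl⟩ := h
    rw [pow_succ]
    refine mul_dvd_mul_left _ ?_
    rw [← Ideal.mem_span_singleton, ← hϖ, IsLocalRing.mem_maximalIdeal, mem_nonunits_iff]
    intro hu
    have hle : Module.length A B ≤ n := by
      refine length_le_of_pow_smul_eq_zero (hϖ ▸ IsLocalRing.maximalIdeal.isMaximal A) n (1 : B)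
        ?_ ?_
      · rw [eq_top_iff]
        rintro b -
        obtain ⟨c, rfl⟩ := hsurj b
        exact Submodule.mem_span_singleton.mpr ⟨c, (Algebra.algebraMap_eq_smul_one c).symm⟩
      · rw [map_mul] at ha
        rw [← Algebra.algebraMap_eq_smul_one]
        exact (hu.map (algebraMap A B)).mul_left_eq_zero.mp ha
    have := hn.trans hle
    norm_cast at this
    omega

section FiberRing

variable {k A V M : Type} [Field k] [CommRing A] [Algebra k A] [AddCommGroup V] [Module k V]
  [AddCommGroup M] [Module A M] (g : V →ₛₗ[algebraMap k A] M) (v : Module.Dual k V) (s₀ : V)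
  (h : v s₀ ≠ 0)

/-- The restriction to the fibre over `[v]` of the functions on the chart `D₊(g s₀)`. -/
def fiberMap : ProjChart A (g s₀) →ₐ[A] FiberRing g v s₀ h :=
  Ideal.Quotient.mkₐ A ((RingHom.ker (pointEval v s₀ h)).map (chartMap g s₀))

theorem fiberMap_surjective : Function.Surjective (fiberMap g v s₀ h) :=
  Ideal.Quotient.mkₐ_surjective A _

theorem fiberMap_chartMap {z : ProjChart k s₀} (hz : pointEval v s₀ h z = 0) :
    fiberMap g v s₀ h (chartMap g s₀ z) = 0 :=
  Ideal.Quotient.eq_zero_iff_mem.mpr (Ideal.mem_map_of_mem _ hz)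

/-- On the fibre over `[v]`, the coordinate `g s / g s₀` is the constant `v s / v s₀`. -/
theorem fiberMap_chartCoord (s : V) :
    fiberMap g v s₀ h (chartCoord A (g s₀) (g s)) =
      algebraMap A (FiberRing g v s₀ h) (algebraMap k A ((v s₀)⁻¹ * v s)) := by
  have hz : pointEval v s₀ h (chartCoord k s₀ s -
      algebraMap k (ProjChart k s₀) ((v s₀)⁻¹ * v s)) = 0 := by
    rw [map_sub, sub_eq_zero]
    refine (chartLift_coord _ _ _ _ _).trans (Eq.trans ?_ (chartLift_algebraMap _ _ _ _ _).symm)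
    rfl
  have h1 := fiberMap_chartMap g v s₀ h hz
  rw [map_sub, map_sub, sub_eq_zero] at h1
  have h2 : chartMap g s₀ (chartCoord k s₀ s) = chartCoord A (g s₀) (g s) :=
    chartLift_coord _ _ _ _ _
  have h3 : chartMap g s₀ (algebraMap k (ProjChart k s₀) ((v s₀)⁻¹ * v s)) =
      algebraMap A _ (algebraMap k A ((v s₀)⁻¹ * v s)) :=
    chartLift_algebraMap _ _ _ _ _
  rw [h2, h3] at h1
  rw [h1, AlgHom.commutes]

theorem algebraMap_fiberRing_surjective (hg : Submodule.span A (Set.range g) = ⊤) :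
    Function.Surjective (algebraMap A (FiberRing g v s₀ h)) := by
  let q : SymmetricAlgebra A M →ₐ[A] FiberRing g v s₀ h :=
    (fiberMap g v s₀ h).comp (toChart A (g s₀))
  have hq : Function.Surjective q :=
    (fiberMap_surjective g v s₀ h).comp (Ideal.Quotient.mkₐ_surjective A _)
  have hι (m : M) : q (SymmetricAlgebra.ι A M m) ∈ (⊥ : Subalgebra A (FiberRing g v s₀ h)) := by
    have hm : m ∈ Submodule.span A (Set.range g) := hg ▸ Submodule.mem_top
    induction hm using Submodule.span_induction with
    | mem x hx =>
      obtain ⟨s, rfl⟩ := hx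
      exact Algebra.mem_bot.mpr ⟨_, (fiberMap_chartCoord g v s₀ h s).symm⟩
    | zero => simp
    | add x y _ _ hx hy => rw [map_add, map_add]; exact add_mem hx hy
    | smul a x _ hx => rw [map_smul, map_smul]; exact Subalgebra.smul_mem _ hx a
  intro b
  obtain ⟨p, rfl⟩ := hq b
  refine Algebra.mem_bot.mp ?_
  induction p using SymmetricAlgebra.induction with
  | algebraMap r => rw [AlgHom.commutes]; exact Subalgebra.algebraMap_mem _ _
  | ι x => exact hι x
  | mul a b ha hb => rw [map_mul]; exact mul_mem ha hb
  | add a b ha hb => rw [map_add]; exact add_mem ha hb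

/-- A relation `∑ fᵢ g(sᵢ) = 0` in `M` gives the function `∑ fᵢ v(sᵢ)` which vanishes on the
fibre over `[v]`. -/
theorem algebraMap_fiberRing_eq_zero {ι : Type} (t : Finset ι) (f : ι → A) (s : ι → V)
    (hf : ∑ i ∈ t, f i • g (s i) = 0) :
    algebraMap A (FiberRing g v s₀ h) (∑ i ∈ t, f i * algebraMap k A (v (s i))) = 0 := by
  have h1 : fiberMap g v s₀ h (chartCoord A (g s₀) (∑ i ∈ t, f i • g (s i))) = 0 := by
    rw [hf, map_zero, map_zero]
  simp only [map_sum, map_smul, fiberMap_chartCoord] at h1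
  have h2 : ∑ i ∈ t, f i * algebraMap k A (v (s i)) =
      algebraMap k A (v s₀) * ∑ i ∈ t, f i * algebraMap k A ((v s₀)⁻¹ * v (s i)) := by
    rw [Finset.mul_sum]
    refine Finset.sum_congr rfl fun i _ => ?_
    rw [mul_left_comm, ← map_mul, mul_inv_cancel_left₀ h]
  rw [h2, map_mul, map_sum]
  simp only [map_mul (algebraMap A _), ← Algebra.smul_def] at h1 ⊢
  rw [h1, smul_zero]

end FiberRing

/-- The local rings of a smooth curve have principal maximal ideals. -/
theorem maximalIdeal_stalk_isPrincipal {C : SmoothProjectiveCurve} (x : C.X) :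
    (IsLocalRing.maximalIdeal (C.X.presheaf.stalk x)).IsPrincipal := by
  obtain ⟨U, hU, V, hV, hxV, e, hsm⟩ :=
    SmoothOfRelativeDimension.exists_isStandardSmoothOfRelativeDimension (n := 1) (f := C.str) x
  have hU' : U = ⊤ := by
    ext y
    have : y = C.str x := Subsingleton.elim (α := PrimeSpectrum ℂ) _ _
    simpa [this] using e hxV
  subst hU'
  let φ : ℂ →+* Γ(C.X, V) := (C.str.appLE ⊤ V e).hom.comp
    (Scheme.ΓSpecIso (CommRingCat.of ℂ)).symm.commRingCatIsoToRingEquiv.toRingHom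
  have hφ : φ.IsStandardSmoothOfRelativeDimension 1 :=
    RingHom.isStandardSmoothOfRelativeDimension_respectsIso.right _ _ hsm
  let S := Γ(C.X, V)
  let A := C.X.presheaf.stalk x
  let _ : Algebra ℂ S := φ.toAlgebra
  let _ : Algebra S A := (C.X.presheaf.germ V x hxV).hom.toAlgebra
  let _ : Algebra ℂ A := ((algebraMap S A).comp φ).toAlgebra
  have : IsScalarTower ℂ S A := .of_algebraMap_eq' rfl
  have : Algebra.IsStandardSmoothOfRelativeDimension 1 ℂ S := hφ
  have : Algebra.IsStandardSmooth ℂ S := this.isStandardSmooth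
  let p := (hV.primeIdealOf ⟨x, hxV⟩).asIdeal
  have : IsLocalization.AtPrime A p := hV.isLocalization_stalk ⟨x, hxV⟩
  have : IsNoetherianRing A := inferInstance
  have : Algebra.FormallyEtale S A := .of_isLocalization p.primeCompl
  have : Algebra.FormallySmooth ℂ A := .comp ℂ S A
  have : Algebra.EssFiniteType S A := .of_isLocalization _ p.primeCompl
  have : Algebra.EssFiniteType ℂ A := .comp ℂ S A
  have e' := KaehlerDifferential.tensorKaehlerEquivOfFormallyEtale ℂ S A
  have : Module.Free A (Ω[A⁄ℂ]) := .of_equiv e'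
  have : Module.Finite A (Ω[A⁄ℂ]) := .equiv e'
  refine maximalIdeal_isPrincipal_of_rank_differentials_le_one (k := ℂ) ?_
  have : Nontrivial S := (algebraMap S A).domain_nontrivial
  rw [← e'.finrank_eq, Module.finrank_baseChange, Module.finrank,
    Algebra.IsStandardSmoothOfRelativeDimension.rank_kaehlerDifferential (R := ℂ) (S := S) 1]
  simp

section ModuleMorphisms

variable {X : Scheme.{0}}

theorem comp_app_apply {M N K : X.Modules} (φ : M ⟶ N) (ψ : N ⟶ K) (U : X.Opens) (m : Γ(M, U)) :
    (φ ≫ ψ).app U m = ψ.app U (φ.app U m) := rfl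

theorem sum_app_apply {ι : Type} (t : Finset ι) {M N : X.Modules} (φ : ι → (M ⟶ N)) (U : X.Opens)
    (m : Γ(M, U)) : (∑ i ∈ t, φ i).app U m = ∑ i ∈ t, (φ i).app U m := by
  induction t using Finset.cons_induction with
  | empty => rfl
  | cons a t ha ih =>
    rw [Finset.sum_cons, Finset.sum_cons, ← ih]
    rfl

theorem app_map {M N : X.Modules} (φ : M ⟶ N) {U V : X.Opens} (h : V ≤ U) (m : Γ(M, U)) :
    φ.app V (M.presheaf.map (homOfLE h).op m) = N.presheaf.map (homOfLE h).op (φ.app U m) :=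
  congr($(φ.mapPresheaf.naturality (homOfLE h).op) m)

/-- Two sections of an `𝒪_X`-module with the same germs are equal. -/
theorem section_ext (M : X.Modules) {U : X.Opens} {s t : Γ(M, U)}
    (h : ∀ x (hx : x ∈ U), M.presheaf.germ U x hx s = M.presheaf.germ U x hx t) : s = t :=
  TopCat.Presheaf.section_ext (⟨M.presheaf, M.isSheaf⟩ : TopCat.Sheaf Ab X) U s t h

/-- The `𝒪_{X,x}`-linear map of stalks induced by a morphism of modules. -/
def stalkLinearMap {M N : X.Modules} (φ : M ⟶ N) (x : X) :
    M.presheaf.stalk x →ₗ[X.presheaf.stalk x] N.presheaf.stalk x where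
  toFun := (TopCat.Presheaf.stalkFunctor Ab x).map φ.mapPresheaf
  map_add' := map_add ((TopCat.Presheaf.stalkFunctor Ab x).map φ.mapPresheaf).hom
  map_smul' r m := by
    obtain ⟨U, hU, m, rfl⟩ := M.presheaf.exists_germ_eq m
    obtain ⟨V, hVU, hV, r, rfl⟩ := X.presheaf.exists_le_germ_eq r hU
    have hm : M.presheaf.germ U x hU m = M.presheaf.germ V x hV (M.presheaf.map (homOfLE hVU).op m) :=
      (TopCat.Presheaf.germ_res_apply M.presheaf (homOfLE hVU) x hV m).symm
    rw [hm, ← germ_smul]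
    erw [TopCat.Presheaf.stalkFunctor_map_germ_apply, TopCat.Presheaf.stalkFunctor_map_germ_apply]
    rw [RingHom.id_apply, ← germ_smul]
    exact congrArg _ (φ.app_smul r _)

theorem stalkLinearMap_germ {M N : X.Modules} (φ : M ⟶ N) {x : X} {U : X.Opens} (hx : x ∈ U)
    (m : Γ(M, U)) : stalkLinearMap φ x (M.presheaf.germ U x hx m) =
      N.presheaf.germ U x hx (φ.app U m) :=
  TopCat.Presheaf.stalkFunctor_map_germ_apply U x hx φ.mapPresheaf m

end ModuleMorphisms

variable {C : SmoothProjectiveCurve}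

section Evaluation

variable (E : C.X.Modules)

/-- The inclusion of the `i`-th summand in `H⁰(E) ⊗ 𝒪_C`. -/
def summand (i : Module.Free.ChooseBasisIndex ℂ (H0 E)) :
    structureModule C.X ⟶ trivialBundle E :=
  Limits.Sigma.ι (fun _ => structureModule C.X) i

theorem summand_desc {N : C.X.Modules}
    (p : Module.Free.ChooseBasisIndex ℂ (H0 E) → (structureModule C.X ⟶ N)) (i) :
    summand E i ≫ (Limits.Sigma.desc p : trivialBundle E ⟶ N) = p i :=
  Limits.Sigma.ι_desc _ _

theorem trivialBundle_hom_ext {N : C.X.Modules} {φ ψ : trivialBundle E ⟶ N}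
    (h : ∀ i, summand E i ≫ φ = summand E i ≫ ψ) : φ = ψ :=
  Limits.Sigma.hom_ext _ _ h

/-- The inclusion of the kernel of the evaluation. -/
def kernelInclusion : evalKernel E ⟶ trivialBundle E := Limits.kernel.ι (evaluation E)

theorem kernelInclusion_evaluation : kernelInclusion E ≫ evaluation E = 0 :=
  Limits.kernel.condition _

theorem evaluation_app_ι (i : Module.Free.ChooseBasisIndex ℂ (H0 E)) (U : C.X.Opens)
    (f : Γ(structureModule C.X, U)) :
    (evaluation E).app U ((summand E i).app U f) =
      asFunction f • E.presheaf.map (homOfLE (le_top : U ≤ ⊤)).op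
        (Module.Free.chooseBasis ℂ (H0 E) i) := by
  rw [← sectionHom_app]
  have h : summand E i ≫ evaluation E = sectionHom E (Module.Free.chooseBasis ℂ (H0 E) i) :=
    summand_desc E _ i
  exact congr(($h).app U f)

/-- The morphism `H⁰(E) ⊗ 𝒪_C → 𝒪_C` given by a linear form on `H⁰(E)`. -/
def functionalHom (v : Module.Dual ℂ (H0 E)) : trivialBundle E ⟶ structureModule C.X :=
  Limits.Sigma.desc fun i => scalarEnd C (v (Module.Free.chooseBasis ℂ (H0 E) i))

theorem functionalHom_app_ι (v : Module.Dual ℂ (H0 E))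
    (i : Module.Free.ChooseBasisIndex ℂ (H0 E)) (U : C.X.Opens)
    (f : Γ(structureModule C.X, U)) :
    asFunction ((functionalHom E v).app U
      ((summand E i).app U f)) =
      asFunction f * constants U (v (Module.Free.chooseBasis ℂ (H0 E) i)) := by
  rw [← scalar_app]
  have h : summand E i ≫ functionalHom E v =
    scalarEnd C (v (Module.Free.chooseBasis ℂ (H0 E) i)) := summand_desc E _ i
  exact congr(asFunction (($h).app U f))

theorem exists_eq_sum_ι [Fintype (Module.Free.ChooseBasisIndex ℂ (H0 E))] (U : C.X.Opens)
    (t : Γ(trivialBundle E, U)) :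
    ∃ f : Module.Free.ChooseBasisIndex ℂ (H0 E) → Γ(structureModule C.X, U),
      t = ∑ i, (summand E i).app U (f i) := by
  classical
  let p (i : Module.Free.ChooseBasisIndex ℂ (H0 E)) : trivialBundle E ⟶ structureModule C.X :=
    Limits.Sigma.desc fun j => if i = j then 𝟙 _ else 0
  have hid : 𝟙 (trivialBundle E) = ∑ i, p i ≫ summand E i := by
    refine trivialBundle_hom_ext E fun j => ?_
    have hp (i) : summand E j ≫ p i = if i = j then 𝟙 _ else 0 := summand_desc E _ j
    rw [Category.comp_id, Preadditive.comp_sum, Finset.sum_eq_single j]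
    · rw [← Category.assoc, hp, if_pos rfl, Category.id_comp]
    · intro i _ hij
      rw [← Category.assoc, hp, if_neg hij, Limits.zero_comp]
    · simp
  refine ⟨fun i => (p i).app U t, ?_⟩
  calc t = (𝟙 (trivialBundle E) : _ ⟶ _).app U t := rfl
    _ = _ := by rw [hid, sum_app_apply]; rfl

/-- The section of the dual span given by a linear form on `H⁰(E)`. -/
def dualSpanSection (v : Module.Dual ℂ (H0 E)) : DualSections (evalKernel E) :=
  kernelInclusion E ≫ functionalHom E v

theorem asFunction_sum {ι : Type} (t : Finset ι) {X : Scheme.{0}} {U : X.Opens}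
    (f : ι → Γ(structureModule X, U)) :
    asFunction (∑ i ∈ t, f i) = ∑ i ∈ t, asFunction (f i) := by
  induction t using Finset.cons_induction with
  | empty => rfl
  | cons a t ha ih =>
    rw [Finset.sum_cons, Finset.sum_cons, ← ih]
    rfl

theorem mem_maximalIdeal_pow_of_le_fiberDivisor (hgg : IsGloballyGenerated E) (o : PH E)
    (x : ClosedPoint C) {ι : Type} (t : Finset ι) (f : ι → C.X.presheaf.stalk x.1) (s : ι → H0 E)
    (hrel : ∑ i ∈ t, f i • germMap E x.1 (s i) = 0) {n : ℕ} (hn : (n : ℕ∞) ≤ fiberDivisor E o x) :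
    ∑ i ∈ t, f i * algebraMap ℂ (C.X.presheaf.stalk x.1) (o.rep (s i)) ∈
      IsLocalRing.maximalIdeal (C.X.presheaf.stalk x.1) ^ n :=
  mem_maximalIdeal_pow_of_le_length
    (B := FiberRing (germMap E x.1) o.rep (exists_rep_ne_zero o).choose
      (exists_rep_ne_zero o).choose_spec)
    (maximalIdeal_stalk_isPrincipal x.1)
    (algebraMap_fiberRing_surjective _ _ _ _ (hgg x.1))
    (algebraMap_fiberRing_eq_zero _ _ _ _ t f s hrel) hn

/-- The section of the dual span given by a point `o` vanishes along `p_* n^* o`. -/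
theorem dualSpanSection_mem [Module.Finite ℂ (H0 E)] (hgg : IsGloballyGenerated E) (o : PH E)
    (d : ClosedPoint C →₀ ℕ) (hd : ∀ x, (d x : ℕ∞) ≤ fiberDivisor E o x) :
    dualSpanSection E o.rep ∈ dualTwistSections (evalKernel E) d := by
  intro U m x hx
  obtain ⟨f, hf⟩ := exists_eq_sum_ι E U ((kernelInclusion E).app U m)
  have h0 : (evaluation E).app U ((kernelInclusion E).app U m) = 0 := by
    rw [← comp_app_apply, kernelInclusion_evaluation]
    rfl
  have hrel : ∑ i, C.X.presheaf.germ U x.1 hx (asFunction (f i)) •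
      germMap E x.1 (Module.Free.chooseBasis ℂ (H0 E) i) = 0 := by
    have h1 := congrArg (E.presheaf.germ U x.1 hx) h0
    rw [hf, map_sum, map_sum, map_zero] at h1
    rw [← h1]
    refine Finset.sum_congr rfl fun i _ => ?_
    rw [evaluation_app_ι, germ_smul]
    congr 1
    exact (TopCat.Presheaf.germ_res_apply E.presheaf (homOfLE le_top) x.1 hx _).symm
  have hval : C.X.presheaf.germ U x.1 hx (asFunction ((dualSpanSection E o.rep).app U m)) =
      ∑ i, C.X.presheaf.germ U x.1 hx (asFunction (f i)) *
        algebraMap ℂ (C.X.presheaf.stalk x.1) (o.rep (Module.Free.chooseBasis ℂ (H0 E) i)) := by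
    rw [dualSpanSection, comp_app_apply, hf, map_sum, asFunction_sum, map_sum]
    refine Finset.sum_congr rfl fun i _ => ?_
    rw [functionalHom_app_ι, map_mul]
    congr 1
    rw [← map_constants (le_top : U ≤ ⊤)]
    exact TopCat.Presheaf.germ_res_apply C.X.presheaf (homOfLE le_top) x.1 hx _
  rw [hval]
  exact mem_maximalIdeal_pow_of_le_fiberDivisor E hgg o x Finset.univ _ _ hrel (hd x)

theorem evaluation_epi (hgg : IsGloballyGenerated E) : Epi (evaluation E) where
  left_cancellation {N} φ ψ h := by
    have hb (i) : φ.app ⊤ (Module.Free.chooseBasis ℂ (H0 E) i) =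
        ψ.app ⊤ (Module.Free.chooseBasis ℂ (H0 E) i) := by
      have h1 := evaluation_app_ι E i ⊤ (ofFunction 1)
      have h2 : asFunction (ofFunction (1 : Γ(C.X, ⊤))) = 1 := rfl
      have h3 : E.presheaf.map (homOfLE (le_top : (⊤ : C.X.Opens) ≤ ⊤)).op
        (Module.Free.chooseBasis ℂ (H0 E) i) = Module.Free.chooseBasis ℂ (H0 E) i :=
        congr($(E.presheaf.map_id (op ⊤)) _)
      rw [h2, one_smul, h3] at h1
      rw [← h1]
      exact congr(($h).app ⊤ _)
    have hs (s : H0 E) : φ.app ⊤ s = ψ.app ⊤ s := by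
      induction (Module.Free.chooseBasis ℂ (H0 E)).mem_span s using Submodule.span_induction with
      | mem x hx => obtain ⟨i, rfl⟩ := hx; exact hb i
      | zero => rw [map_zero, map_zero]
      | add x y _ _ hx hy => rw [map_add, map_add, hx, hy]
      | smul a x _ hx =>
        have h1 := φ.app_smul (constants ⊤ a) x
        have h2 := ψ.app_smul (constants ⊤ a) x
        exact h1.trans ((congrArg _ hx).trans h2.symm)
    have hx (x : C.X) : stalkLinearMap φ x = stalkLinearMap ψ x := by
      refine LinearMap.ext_on_range (v := germAt E x) (hgg x) fun s => ?_
      exact (stalkLinearMap_germ φ _ s).trans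
        ((congrArg _ (hs s)).trans (stalkLinearMap_germ ψ _ s).symm)
    refine Scheme.Modules.hom_ext _ _ fun U => ?_
    ext m
    refine section_ext N fun x hxU => ?_
    rw [← stalkLinearMap_germ, ← stalkLinearMap_germ, hx]

end Evaluation

section SplitModules

variable {R L E : Type} [CommRing R] [AddCommGroup L] [Module R L] [AddCommGroup E] [Module R E]
  {π : E →ₗ[R] R} {ι : L →ₗ[R] E} {ρ : E →ₗ[R] L} {s : E}

/-- If `E = R s ⊕ L` is free with basis `e₀, e₁` and `π : E → R` is the projection, then `L` is
free with basis `π(e₁) e₀ - π(e₀) e₁`. -/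
theorem bijective_smul_complement (hιπ : ∀ l, π (ι l) = 0) (hιρ : ∀ l, ρ (ι l) = l)
    (hs : π s = 1) (hadd : ∀ m, m = π m • s + ι (ρ m)) {e : Fin 2 → E}
    (he : Function.Bijective fun f : Fin 2 → R => ∑ i, f i • e i) :
    Function.Bijective fun f : Fin 1 → R => ∑ i, f i • ρ (π (e 1) • e 0 - π (e 0) • e 1) := by
  have hι : ι (ρ (π (e 1) • e 0 - π (e 0) • e 1)) = π (e 1) • e 0 - π (e 0) • e 1 := by
    have h := hadd (π (e 1) • e 0 - π (e 0) • e 1)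
    have h0 : π (π (e 1) • e 0 - π (e 0) • e 1) = 0 := by
      simp only [map_sub, map_smul, smul_eq_mul]; ring
    rw [h0, zero_smul, zero_add] at h
    exact h.symm
  obtain ⟨c, hc⟩ := he.2 s
  simp only [Fin.sum_univ_two] at hc
  have hc1 : c 0 * π (e 0) + c 1 * π (e 1) = 1 := by
    rw [← hs, ← hc]; simp
  constructor
  · intro f g hfg
    simp only [Fin.sum_univ_one] at hfg
    have h1 := congrArg ι hfg
    rw [map_smul, map_smul, hι] at h1
    have h2 : (![f 0 * π (e 1), - (f 0 * π (e 0))] : Fin 2 → R) =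
        ![g 0 * π (e 1), - (g 0 * π (e 0))] := by
      refine he.1 ?_
      simp only [Fin.sum_univ_two, Matrix.cons_val_zero, Matrix.cons_val_one]
      rw [neg_smul, neg_smul, mul_smul, mul_smul, mul_smul, mul_smul, ← sub_eq_add_neg,
        ← sub_eq_add_neg, ← smul_sub, ← smul_sub, h1]
    have h3 := congrFun h2 0
    have h4 := congrFun h2 1
    simp only [Matrix.cons_val_zero, Matrix.cons_val_one, neg_inj] at h3 h4
    ext i
    rw [Subsingleton.elim i 0]
    linear_combination (g 0 - f 0) * hc1 + c 0 * h4 + c 1 * h3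
  · intro l
    obtain ⟨p, hp⟩ := he.2 (ι l)
    simp only [Fin.sum_univ_two] at hp
    have hp0 : p 0 * π (e 0) + p 1 * π (e 1) = 0 := by
      rw [← hιπ l, ← hp]; simp
    refine ⟨fun _ => p 0 * c 1 - p 1 * c 0, ?_⟩
    have h : (p 0 * c 1 - p 1 * c 0) • (π (e 1) • e 0 - π (e 0) • e 1) = ι l := by
      have h0 : (p 0 * c 1 - p 1 * c 0) * π (e 1) = p 0 := by
        linear_combination p 0 * hc1 - c 0 * hp0
      have h1 : (p 0 * c 1 - p 1 * c 0) * π (e 0) = - p 1 := by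
        linear_combination c 1 * hp0 - p 1 * hc1
      rw [smul_sub, smul_smul, smul_smul, h0, h1, neg_smul, sub_neg_eq_add, hp]
    simp only [Fin.sum_univ_one]
    rw [← map_smul, h, hιρ]

/-- If `E = R s ⊕ L` and `L` is free with basis `l`, then `E` is free with basis `s, l`. -/
theorem bijective_smul_cons (hιπ : ∀ l, π (ι l) = 0) (hιρ : ∀ l, ρ (ι l) = l)
    (hs : π s = 1) (hsρ : ρ s = 0) (hadd : ∀ m, m = π m • s + ι (ρ m)) {l : Fin 1 → L}
    (hl : Function.Bijective fun f : Fin 1 → R => ∑ i, f i • l i) :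
    Function.Bijective fun f : Fin 2 → R => ∑ i, f i • (![s, ι (l 0)] : Fin 2 → E) i := by
  simp only [Fin.sum_univ_two, Matrix.cons_val_zero, Matrix.cons_val_one]
  constructor
  · intro f g hfg
    have h0 := congrArg π hfg
    have h1 := congrArg ρ hfg
    simp only [map_add, map_smul, hs, hsρ, hιπ, hιρ, smul_zero, add_zero, zero_add, smul_eq_mul, mul_zero,
      mul_one] at h0 h1
    have h2 : (fun _ : Fin 1 => f 1) = fun _ => g 1 := hl.1 (by simpa using h1)
    ext i
    fin_cases i
    · exact h0
    · exact congrFun h2 0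
  · intro m
    obtain ⟨f, hf⟩ := hl.2 (ρ m)
    simp only [Fin.sum_univ_one] at hf
    refine ⟨![π m, f 0], ?_⟩
    simp only [Matrix.cons_val_zero, Matrix.cons_val_one]
    rw [← map_smul, hf]
    exact (hadd m).symm

end SplitModules

section Frames

variable {X : Scheme.{0}} {r : ℕ}

/-- The sections `s₁, …, s_r` of `M` over `U` are a basis of `M(V)` for all open `V ⊆ U`. -/
def IsFrame (M : X.Modules) {U : X.Opens} (s : Fin r → Γ(M, U)) : Prop :=
  ∀ (V : X.Opens) (h : V ≤ U), Function.Bijective fun f : Fin r → Γ(X, V) =>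
    ∑ i, f i • M.presheaf.map (homOfLE h).op (s i)

theorem germ_res (M : X.Modules) {U V : X.Opens} (h : V ≤ U) {x : X} (hx : x ∈ V) (m : Γ(M, U)) :
    M.presheaf.germ V x hx (M.presheaf.map (homOfLE h).op m) = M.presheaf.germ U x (h hx) m :=
  TopCat.Presheaf.germ_res_apply M.presheaf (homOfLE h) x hx m

theorem map_map (M : X.Modules) {U V W : X.Opens} (h : V ≤ U) (h' : W ≤ V) (m : Γ(M, U)) :
    M.presheaf.map (homOfLE h').op (M.presheaf.map (homOfLE h).op m) =
      M.presheaf.map (homOfLE (h'.trans h)).op m := by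
  rw [← ConcreteCategory.comp_apply, ← Functor.map_comp]
  rfl

theorem germ_sum_smul (M : X.Modules) {U V : X.Opens} (h : V ≤ U) {x : X} (hx : x ∈ V)
    (s : Fin r → Γ(M, U)) (f : Fin r → Γ(X, V)) :
    M.presheaf.germ V x hx (∑ i, f i • M.presheaf.map (homOfLE h).op (s i)) =
      ∑ i, X.presheaf.germ V x hx (f i) • M.presheaf.germ U x (h hx) (s i) := by
  rw [map_sum]
  refine Finset.sum_congr rfl fun i _ => ?_
  rw [germ_smul, germ_res]

theorem IsFrame.linearIndependent {M : X.Modules} {U : X.Opens} {s : Fin r → Γ(M, U)}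
    (hs : IsFrame M s) {x : X} (hx : x ∈ U) :
    LinearIndependent (X.presheaf.stalk x) fun i => M.presheaf.germ U x hx (s i) := by
  rw [Fintype.linearIndependent_iff]
  intro g hg
  choose V hVU hV f hf using fun i => X.presheaf.exists_le_germ_eq (g i) hx
  let W : X.Opens := U ⊓ Finset.univ.inf V
  have hxW : x ∈ W := by
    refine ⟨hx, ?_⟩
    simpa [Opens.coe_finset_inf] using hV
  have hWV (i) : W ≤ V i := inf_le_right.trans (Finset.inf_le (Finset.mem_univ i))
  have hWU : W ≤ U := inf_le_left
  have hg' (i) : X.presheaf.germ W x hxW (X.presheaf.map (homOfLE (hWV i)).op (f i)) = g i := by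
    rw [← hf i]
    exact TopCat.Presheaf.germ_res_apply X.presheaf (homOfLE (hWV i)) x hxW (f i)
  have h0 : M.presheaf.germ W x hxW (∑ i, X.presheaf.map (homOfLE (hWV i)).op (f i) •
      M.presheaf.map (homOfLE hWU).op (s i)) = M.presheaf.germ W x hxW 0 := by
    rw [germ_sum_smul, map_zero, ← hg]
    exact Finset.sum_congr rfl fun i _ => by rw [hg' i]
  obtain ⟨W', hxW', i₁, i₂, h1⟩ := M.presheaf.germ_eq x hxW hxW _ _ h0
  have h2 : (fun i => X.presheaf.map i₁.op (X.presheaf.map (homOfLE (hWV i)).op (f i))) =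
      fun _ => (0 : Γ(X, W')) := by
    refine (hs W' (i₁.le.trans hWU)).1 ?_
    simp only [zero_smul, Finset.sum_const_zero]
    rw [map_zero, map_sum] at h1
    rw [← h1]
    refine Finset.sum_congr rfl fun i _ => ?_
    rw [Scheme.Modules.map_smul]
    congr 1
    exact (map_map M hWU i₁.le (s i)).symm
  intro i
  rw [← hg' i, ← TopCat.Presheaf.germ_res_apply X.presheaf i₁ x hxW', congrFun h2 i, map_zero]

theorem IsFrame.span_germ {M : X.Modules} {U : X.Opens} {s : Fin r → Γ(M, U)}
    (hs : IsFrame M s) {x : X} (hx : x ∈ U) :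
    ⊤ ≤ Submodule.span (X.presheaf.stalk x)
      (Set.range fun i => M.presheaf.germ U x hx (s i)) := by
  rintro m -
  obtain ⟨V, hVU, hV, m, rfl⟩ := M.presheaf.exists_le_germ_eq m hx
  obtain ⟨f, rfl⟩ := (hs V hVU).2 m
  rw [germ_sum_smul]
  exact Submodule.sum_mem _ fun i _ =>
    Submodule.smul_mem _ _ (Submodule.subset_span (Set.mem_range_self i))

/-- The germs of a frame form a basis of the stalk. -/
def IsFrame.stalkBasis {M : X.Modules} {U : X.Opens} {s : Fin r → Γ(M, U)}
    (hs : IsFrame M s) {x : X} (hx : x ∈ U) :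
    Module.Basis (Fin r) (X.presheaf.stalk x) (M.presheaf.stalk x) :=
  .mk (hs.linearIndependent hx) (hs.span_germ hx)

theorem IsFrame.stalkBasis_apply {M : X.Modules} {U : X.Opens} {s : Fin r → Γ(M, U)}
    (hs : IsFrame M s) {x : X} (hx : x ∈ U) (i : Fin r) :
    hs.stalkBasis hx i = M.presheaf.germ U x hx (s i) :=
  Module.Basis.mk_apply _ _ i

end Frames

section SplitBundles

variable {X : Scheme.{0}}

/-- A morphism of modules, on sections over `U`, as a linear map. -/
def appLinear {M N : X.Modules} (φ : M ⟶ N) (U : X.Opens) : Γ(M, U) →ₗ[Γ(X, U)] Γ(N, U) where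
  toFun := φ.app U
  map_add' := map_add (φ.app U).hom
  map_smul' := φ.app_smul

/-- A linear form on a module, on sections over `U`. -/
def formLinear {M : X.Modules} (φ : M ⟶ structureModule X) (U : X.Opens) :
    Γ(M, U) →ₗ[Γ(X, U)] Γ(X, U) where
  toFun m := asFunction (φ.app U m)
  map_add' := map_add (φ.app U).hom
  map_smul' := φ.app_smul

/-- The unit section of `𝒪_X`. -/
def unitSection (U : X.Opens) : Γ(structureModule X, U) := ofFunction 1

theorem map_unitSection {U V : X.Opens} (h : V ≤ U) :
    (structureModule X).presheaf.map (homOfLE h).op (unitSection U) = unitSection V :=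
  map_one (X.presheaf.map (homOfLE h).op).hom

theorem app_eq_smul_unitSection {M : X.Modules} (σ : structureModule X ⟶ M) (U : X.Opens)
    (f : Γ(structureModule X, U)) : σ.app U f = asFunction f • σ.app U (unitSection U) := by
  rw [← Scheme.Modules.Hom.app_smul]
  congr 1
  exact (mul_one (asFunction f)).symm

theorem isFrame_unitSection (U : X.Opens) :
    IsFrame (structureModule X) (fun _ : Fin 1 => unitSection U) := by
  intro V h
  have h1 (f : Fin 1 → Γ(X, V)) :
      ∑ i, f i • (structureModule X).presheaf.map (homOfLE h).op (unitSection U) =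
        ofFunction (f 0) := by
    rw [Fin.sum_univ_one, map_unitSection]
    exact mul_one (f 0)
  simp only [h1]
  exact (Equiv.funUnique (Fin 1) Γ(X, V)).bijective

variable {L E : X.Modules} {σ : structureModule X ⟶ E} {π : E ⟶ structureModule X} {ι : L ⟶ E}
  {ρ : E ⟶ L}

theorem IsFrame.complement (hιπ : ι ≫ π = 0) (hιρ : ι ≫ ρ = 𝟙 L) (hσπ : σ ≫ π = 𝟙 _)
    (hadd : π ≫ σ + ρ ≫ ι = 𝟙 E) {U : X.Opens} {e : Fin 2 → Γ(E, U)} (he : IsFrame E e) :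
    IsFrame L fun _ : Fin 1 => ρ.app U (formLinear π U (e 1) • e 0 - formLinear π U (e 0) • e 1) := by
  intro V h
  have key := bijective_smul_complement (π := formLinear π V) (ι := appLinear ι V)
    (ρ := appLinear ρ V) (s := σ.app V (unitSection V)) (fun l => congr(($hιπ).app V l))
    (fun l => congr(($hιρ).app V l)) congr(($hσπ).app V (unitSection V))
    (fun m => by
      have h1 : m = σ.app V (π.app V m) + ι.app V (ρ.app V m) := congr(($hadd.symm).app V m)
      rw [app_eq_smul_unitSection] at h1
      exact h1) (he V h)
  convert key using 4 with f i
  rw [← app_map, map_sub, Scheme.Modules.map_smul, Scheme.Modules.map_smul]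
  have h2 (m : Γ(E, U)) : X.presheaf.map (homOfLE h).op (formLinear π U m) =
      formLinear π V (E.presheaf.map (homOfLE h).op m) := (app_map π h m).symm
  rw [h2, h2]
  rfl

theorem IsFrame.cons (hιπ : ι ≫ π = 0) (hιρ : ι ≫ ρ = 𝟙 L) (hσπ : σ ≫ π = 𝟙 _) (hσρ : σ ≫ ρ = 0)
    (hadd : π ≫ σ + ρ ≫ ι = 𝟙 E) {U : X.Opens} {l : Fin 1 → Γ(L, U)} (hl : IsFrame L l) :
    IsFrame E ![σ.app U (unitSection U), ι.app U (l 0)] := by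
  intro V h
  have key := bijective_smul_cons (π := formLinear π V) (ι := appLinear ι V)
    (ρ := appLinear ρ V) (s := σ.app V (unitSection V)) (fun l => congr(($hιπ).app V l))
    (fun l => congr(($hιρ).app V l)) congr(($hσπ).app V (unitSection V))
    congr(($hσρ).app V (unitSection V))
    (fun m => by
      have h1 : m = σ.app V (π.app V m) + ι.app V (ρ.app V m) := congr(($hadd.symm).app V m)
      rw [app_eq_smul_unitSection] at h1
      exact h1) (hl V h)
  convert key using 4 with f i
  fin_cases i
  · change E.presheaf.map (homOfLE h).op (σ.app U (unitSection U)) = σ.app V (unitSection V)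
    rw [← app_map, map_unitSection]
  · exact (app_map ι h (l 0)).symm

end SplitBundles

theorem genericPoint_mem {U : C.X.Opens} {x : C.X} (hx : x ∈ U) : genericPoint C.X ∈ U :=
  ((genericPoint_spec C.X).specializes trivial).mem_open U.2 hx

theorem toGeneric_germ (M : C.X.Modules) {x : C.X} {U : C.X.Opens} (hx : x ∈ U) (m : Γ(M, U)) :
    toGeneric M x (M.presheaf.germ U x hx m) =
      M.presheaf.germ U (genericPoint C.X) (genericPoint_mem hx) m :=
  TopCat.Presheaf.germ_stalkSpecializes_apply M.presheaf hx _ m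

/-- The degree of a bundle, computed with local frames. -/
theorem hasDegree_of_frames {M : C.X.Modules} {r : ℕ} {U : C.X → C.X.Opens} (hU : ∀ x, x ∈ U x)
    {s : ∀ x, Fin r → Γ(M, U x)} (hs : ∀ x, IsFrame M (s x))
    (A : ClosedPoint C → Matrix (Fin r) (Fin r) C.X.functionField)
    (hA : ∀ (x : ClosedPoint C) j,
      M.presheaf.germ _ (genericPoint C.X) (hU _) (s (genericPoint C.X) j) =
        ∑ i, A x i j • M.presheaf.germ _ (genericPoint C.X) (genericPoint_mem (hU x.1)) (s x.1 i)) :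
    HasDegree M r (∑ᶠ x : ClosedPoint C, C.X.ord (A x).det x.1) := by
  refine ⟨(hs (genericPoint C.X)).stalkBasis (hU _), fun x => (hs x.1).stalkBasis (hU x.1), A, ?_,
    rfl⟩
  intro x j
  rw [IsFrame.stalkBasis_apply]
  refine (hA x j).trans (Finset.sum_congr rfl fun i _ => ?_)
  rw [IsFrame.stalkBasis_apply, toGeneric_germ]

theorem hasDegree_structureModule : HasDegree (structureModule C.X) 1 0 := by
  have h := hasDegree_of_frames (M := structureModule C.X) (U := fun _ => ⊤) (fun _ => trivial)
    (fun _ => isFrame_unitSection ⊤) (fun _ => 1) (fun x j => by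
      rw [Fin.sum_univ_one, Subsingleton.elim j 0, Matrix.one_apply_eq, one_smul])
  have h1 (x : C.X) : C.X.ord (1 : C.X.functionField) x = 0 := by
    have : Nonempty (⊤ : C.X.Opens) := ⟨⟨x, trivial⟩⟩
    have h := Scheme.ord_of_isUnit (X := C.X) (U := ⊤) isUnit_one (x := x) trivial
    rwa [map_one] at h
  simpa [h1] using h

/-- A rank-two bundle with a trivial direct summand is not stable. -/
theorem not_isStable_of_retraction {E : C.X.Modules} (hE : IsVectorBundle E 2)
    {σ : structureModule C.X ⟶ E} {π : E ⟶ structureModule C.X} (hσπ : σ ≫ π = 𝟙 _) :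
    ¬ IsStable E := by
  intro hst
  let L : C.X.Modules := Limits.kernel π
  let ι : L ⟶ E := Limits.kernel.ι π
  have hιπ : ι ≫ π = 0 := Limits.kernel.condition π
  let ρ : E ⟶ L := Limits.kernel.lift π (𝟙 E - π ≫ σ) (by
    rw [Preadditive.sub_comp, Category.id_comp, Category.assoc, hσπ, Category.comp_id, sub_self])
  have hρι : ρ ≫ ι = 𝟙 E - π ≫ σ := Limits.kernel.lift_ι _ _ _
  have hmono : Mono ι := inferInstanceAs (Mono (Limits.kernel.ι π))
  have hιρ : ι ≫ ρ = 𝟙 L := by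
    rw [← cancel_mono ι, Category.assoc, hρι, Preadditive.comp_sub, Category.comp_id,
      ← Category.assoc, hιπ, Limits.zero_comp, sub_zero, Category.id_comp]
  have hσρ : σ ≫ ρ = 0 := by
    rw [← cancel_mono ι, Category.assoc, hρι, Preadditive.comp_sub, Category.comp_id,
      ← Category.assoc, hσπ, Category.id_comp, sub_self, Limits.zero_comp]
  have hadd : π ≫ σ + ρ ≫ ι = 𝟙 E := by rw [hρι, add_sub_cancel]
  choose U hU e he using hE
  let l (x : C.X) : Fin 1 → Γ(L, U x) := fun _ =>
    ρ.app (U x) (formLinear π (U x) (e x 1) • e x 0 - formLinear π (U x) (e x 0) • e x 1)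
  have hl (x : C.X) : IsFrame L (l x) := IsFrame.complement hιπ hιρ hσπ hadd (he x)
  have ha (x : ClosedPoint C) : ∃ a : C.X.functionField,
      L.presheaf.germ _ (genericPoint C.X) (hU _) (l (genericPoint C.X) 0) =
        a • L.presheaf.germ _ (genericPoint C.X) (genericPoint_mem (hU x.1)) (l x.1 0) := by
    let b := (hl x.1).stalkBasis (genericPoint_mem (hU x.1))
    refine ⟨b.repr (L.presheaf.germ _ (genericPoint C.X) (hU _) (l (genericPoint C.X) 0)) 0, ?_⟩
    have h := (b.sum_repr (L.presheaf.germ _ (genericPoint C.X) (hU _)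
      (l (genericPoint C.X) 0))).symm
    rwa [Fin.sum_univ_one, IsFrame.stalkBasis_apply] at h
  choose a ha using ha
  have hdegL := hasDegree_of_frames hU hl (fun x => Matrix.diagonal fun _ => a x) (fun x j => by
    rw [Fin.sum_univ_one, Subsingleton.elim j 0, Matrix.diagonal_apply_eq]
    exact ha x)
  have hdegE := hasDegree_of_frames hU (fun x => IsFrame.cons hιπ hιρ hσπ hσρ hadd (hl x))
    (fun x => Matrix.diagonal ![1, a x]) (fun x j => by
      rw [Fin.sum_univ_two]
      fin_cases j
      · have h (W : C.X.Opens) (hW : genericPoint C.X ∈ W) :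
            E.presheaf.germ W (genericPoint C.X) hW (σ.app W (unitSection W)) =
              E.presheaf.germ ⊤ (genericPoint C.X) trivial (σ.app ⊤ (unitSection ⊤)) := by
          rw [← map_unitSection (le_top : W ≤ ⊤), app_map, germ_res]
        simp only [Fin.zero_eta, Matrix.cons_val_zero, Matrix.diagonal_apply_eq, Matrix.cons_val_one,
          one_smul, Matrix.diagonal_apply_ne _ (one_ne_zero : (1 : Fin 2) ≠ 0), zero_smul, add_zero]
        rw [h, h]
      · simp only [Fin.mk_one, Matrix.cons_val_zero, Matrix.diagonal_apply_eq, Matrix.cons_val_one,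
          Matrix.diagonal_apply_ne _ (zero_ne_one : (0 : Fin 2) ≠ 1), zero_smul, zero_add]
        rw [← stalkLinearMap_germ ι, ← stalkLinearMap_germ ι, ha x, map_smul])
  have hdet (x : ClosedPoint C) : (Matrix.diagonal ![1, a x] : Matrix _ _ C.X.functionField).det =
      (Matrix.diagonal fun _ : Fin 1 => a x).det := by
    simp
  simp only [hdet] at hdegE
  have hσ : Mono σ := (SplitMono.mk π hσπ).mono
  have h1 := hst _ σ (fun x => ⟨⊤, trivial, _, isFrame_unitSection ⊤⟩) hσ _ _
    hasDegree_structureModule hdegE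
  have h2 := hst L ι (fun x => ⟨U x, hU x, l x, hl x⟩) hmono _ _ hdegL hdegE
  omega

/-- A nonzero linear form on `H⁰(E)` gives a nonzero section of the dual span. -/
theorem dualSpanSection_ne_zero {E : C.X.Modules} (hE : IsVectorBundle E 2) (hst : IsStable E)
    (hgg : IsGloballyGenerated E) {v : Module.Dual ℂ (H0 E)} (hv : v ≠ 0) :
    dualSpanSection E v ≠ 0 := by
  intro h0
  have := evaluation_epi E hgg
  let π : E ⟶ structureModule C.X := Abelian.epiDesc (evaluation E) (functionalHom E v) h0
  have hπ : evaluation E ≫ π = functionalHom E v := Abelian.comp_epiDesc _ _ _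
  have hb (i) : asFunction (π.app ⊤ (Module.Free.chooseBasis ℂ (H0 E) i)) =
      constants ⊤ (v (Module.Free.chooseBasis ℂ (H0 E) i)) := by
    have h1 := functionalHom_app_ι E v i ⊤ (unitSection ⊤)
    rw [← hπ, comp_app_apply, evaluation_app_ι] at h1
    have h2 : asFunction (unitSection (⊤ : C.X.Opens)) = 1 := rfl
    have h3 : E.presheaf.map (homOfLE (le_top : (⊤ : C.X.Opens) ≤ ⊤)).op
      (Module.Free.chooseBasis ℂ (H0 E) i) = Module.Free.chooseBasis ℂ (H0 E) i :=
      congr($(E.presheaf.map_id (op ⊤)) _)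
    rwa [h2, one_smul, one_mul, h3] at h1
  have hs (s : H0 E) : formLinear π ⊤ s = constants ⊤ (v s) := by
    induction (Module.Free.chooseBasis ℂ (H0 E)).mem_span s using Submodule.span_induction with
    | mem x hx => obtain ⟨i, rfl⟩ := hx; exact hb i
    | zero => rw [map_zero, map_zero, map_zero]
    | add x y _ _ hx hy => rw [map_add, map_add, map_add, hx, hy]
    | smul a x _ hx =>
      rw [map_smul v, smul_eq_mul, map_mul, ← hx]
      exact (formLinear π ⊤).map_smul (constants ⊤ a) x
  obtain ⟨t, ht⟩ : ∃ t, v t ≠ 0 := by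
    by_contra! h
    exact hv (LinearMap.ext h)
  let s : H0 E := (v t)⁻¹ • t
  have hvs : v s = 1 := by simp [s, ht]
  refine not_isStable_of_retraction hE (σ := sectionHom E s) (π := π) ?_ hst
  refine scalar_ext fun U f => ?_
  rw [comp_app_apply, sectionHom_app, Scheme.Modules.Hom.app_smul, app_map]
  have h1 : π.app ⊤ s = unitSection ⊤ := (hs s).trans (by rw [hvs, map_one]; rfl)
  rw [h1, map_unitSection]
  exact mul_one (asFunction f)

end OcticScroll

end

open OcticScroll in
/-- `C` is a smooth non-hyperelliptic complex projective curve of genus 3. `E` is a stable, globally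
generated rank-two bundle on `C` with `det E ≅ ω_C ⊗ ω_C` and `h⁰(E) = 4`. For `o ∈ Sing R`,
where `R ⊂ ℙ³ = ℙ(H⁰(E)^*)` is the tautological scroll, and for an effective divisor
`d ≤ p_* n^* o`, one has `h⁰(Ē(-d)) ≥ 1`. -/
theorem h0_dual_span_twist_pos (C : SmoothProjectiveCurve) (hgenus : genus C = 3)
    (hnonhyp : ¬ HasDegreeTwoMap C)
    (E : C.X.Modules) (hE : IsVectorBundle E 2)
    (hdet : Nonempty (detTwo E ≅ tensor (canonicalSheaf C) (canonicalSheaf C)))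
    (hstable : IsStable E) (hgg : IsGloballyGenerated E) (hh0 : h0 E = 4)
    (o : PH E) (ho : o ∈ singularLocus E)
    (d : ClosedPoint C →₀ ℕ) (hd : ∀ x, (d x : ℕ∞) ≤ fiberDivisor E o x) :
    1 ≤ h0DualSpanTwist E d := by
  have hfin : Module.Finite ℂ (H0 E) := by
    rw [← Module.rank_lt_aleph0_iff]
    exact hh0.trans_lt (Cardinal.natCast_lt_aleph0 (n := 4))
  rw [h0DualSpanTwist, Cardinal.one_le_iff_ne_zero]
  have : Nontrivial (dualTwistSections (evalKernel E) d) :=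
    ⟨⟨⟨_, dualSpanSection_mem E hgg o d hd⟩, 0, fun h =>
      dualSpanSection_ne_zero hE hstable hgg o.rep_nonzero (congrArg Subtype.val h)⟩⟩
  exact rank_pos.ne'
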